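/- Let c and k be positive integers with c + 1 ≤ k, and let m be sufficiently large; set n = ⌊m^{c-1+1/k} / (4 k^{c+1})⌋. Consider the random bipartite graph model on L = {u_1, ..., u_n} and R with |R| = m, each Γ(u_j) uniform on c-element subsets of R, independently. Let Y be the number of pairs (S, S') with S ⊆ L, c+1 ≤ |S| ≤ k, S' ⊆ R, |S'| = |S| − 1, Γ(S) ⊆ S', and let Z be the number of right vertices v with |deg(v) − nc/m| > √((n/2)·ln(4m)). If c-element sets C_1, ..., C_n ⊆ R are chosen sequentially so that each C_j minimizes the conditional expectation E[Y + Z | Γ(u_1) = C_1, ..., Γ(u_j) = C] over all c-element subsets C of R, then in the resulting deterministic graph Y = 0 and Z = 0; that is, the graph is a c-uniform (n, cn, k, m)-combinatorial batch code in which every right vertex has degree in [nc/m − √((n/2)·ln(4m)), nc/m + √((n/2)·ln(4m))]. -/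

import Mathlib

attribute [local instance] Classical.propDecidable

lemma aux_hoeff {A : Type} [Fintype A] [Nonempty A] (f : A → ℝ) (a p : ℝ)
    (hf : ∀ x, f x ∈ Set.Icc a (a + 1)) (hp : ∑ x, f x = Fintype.card A * p) (t : ℝ) :
    ∑ x, Real.exp (t * (f x - p)) ≤ Fintype.card A * Real.exp (t ^ 2 / 8) := by
  let _ : MeasurableSpace A := ⊤
  have hN : (0 : ℝ) < Fintype.card A := by exact_mod_cast Fintype.card_pos
  have h := ProbabilityTheory.hasSubgaussianMGF_of_mem_Icc
    (μ := (PMF.uniformOfFintype A).toMeasure) (X := f) (a := a) (b := a + 1)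
    (measurable_from_top.aemeasurable) (Filter.Eventually.of_forall hf)
  have hm : ∫ x, f x ∂(PMF.uniformOfFintype A).toMeasure = p := by
    rw [PMF.integral_eq_sum]
    simp [← Finset.mul_sum, hp]
  rw [hm] at h
  have h2 := h.mgf_le t
  rw [ProbabilityTheory.mgf, PMF.integral_eq_sum] at h2
  simp [← Finset.mul_sum] at h2
  rw [inv_mul_le_iff₀ hN] at h2
  refine h2.trans (le_of_eq ?_)
  congr 2
  ring

lemma aux_tail {A : Type} [Fintype A] [Nonempty A] (f : A → ℝ) (a p : ℝ)
    (hf : ∀ x, f x ∈ Set.Icc a (a + 1)) (hp : ∑ x, f x = Fintype.card A * p)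
    (n : ℕ) (hn : 0 < n) (t : ℝ) (ht : 0 ≤ t) :
    ((Finset.univ.filter fun ω : Fin n → A => t < ∑ i, (f (ω i) - p)).card : ℝ) ≤
      (Fintype.card A : ℝ) ^ n * Real.exp (-(2 * t ^ 2 / n)) := by
  have hn' : (0 : ℝ) < n := by exact_mod_cast hn
  set l : ℝ := 4 * t / n with hl
  have hl0 : 0 ≤ l := by positivity
  have h1 : ∑ ω : Fin n → A, ∏ i, Real.exp (l * (f (ω i) - p)) ≤
      ((Fintype.card A : ℝ) * Real.exp (l ^ 2 / 8)) ^ n := by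
    have := (Finset.prod_univ_sum (fun _ : Fin n => (Finset.univ : Finset A))
      (fun _ x => Real.exp (l * (f x - p)))).symm
    rw [Fintype.piFinset_univ] at this
    rw [this, Finset.prod_const, Finset.card_univ, Fintype.card_fin]
    gcongr
    exact aux_hoeff f a p hf hp l
  have h2 : ((Finset.univ.filter fun ω : Fin n → A => t < ∑ i, (f (ω i) - p)).card : ℝ)
      * Real.exp (l * t) ≤ ∑ ω : Fin n → A, ∏ i, Real.exp (l * (f (ω i) - p)) := by
    rw [← nsmul_eq_mul]
    refine (Finset.card_nsmul_le_sum _ (fun ω : Fin n → A => ∏ i, Real.exp (l * (f (ω i) - p))) _ ?_).trans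
      (Finset.sum_le_sum_of_subset_of_nonneg (Finset.filter_subset _ _) ?_)
    · intro ω hω
      rw [Finset.mem_filter] at hω
      rw [← Real.exp_sum, ← Finset.mul_sum]
      gcongr
      exact hω.2.le
    · intro ω _ _
      exact Finset.prod_nonneg fun i _ => (Real.exp_pos _).le
  have h3 := h2.trans h1
  rw [← le_div_iff₀ (Real.exp_pos _)] at h3
  refine h3.trans (le_of_eq ?_)
  rw [mul_pow, mul_div_assoc, ← Real.exp_nat_mul, ← Real.exp_sub]
  congr 2
  rw [hl]
  field_simp
  ring

lemma aux_derand {A : Type} [Fintype A] [Nonempty A] (n : ℕ) (g : (Fin n → A) → ℝ)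
    (ce : ℕ → (Fin n → A) → ℝ)
    (hce : ∀ j ω, ce j ω = (∑ ω' ∈ Finset.univ.filter
        (fun ω' : Fin n → A => ∀ i : Fin n, (i : ℕ) < j → ω' i = ω i), g ω') /
      ((Finset.univ.filter
        (fun ω' : Fin n → A => ∀ i : Fin n, (i : ℕ) < j → ω' i = ω i)).card : ℝ))
    (Cs : Fin n → A)
    (hCs : ∀ j : Fin n, ∀ D : A, ce ((j : ℕ) + 1) Cs ≤ ce ((j : ℕ) + 1) (Function.update Cs j D)) :
    g Cs ≤ (∑ ω, g ω) / (Fintype.card A : ℝ) ^ n := by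
  have hpos : ∀ (j : ℕ) (ω : Fin n → A), (0 : ℝ) < ((Finset.univ.filter
        (fun ω' : Fin n → A => ∀ i : Fin n, (i : ℕ) < j → ω' i = ω i)).card : ℝ) := by
    intro j ω
    exact_mod_cast Finset.card_pos.2 ⟨ω, by simp⟩
  have step : ∀ j : Fin n, ce ((j : ℕ) + 1) Cs ≤ ce j Cs := by
    intro j
    have hfib : ∀ D, (Finset.univ.filter
        (fun ω' : Fin n → A => ∀ i : Fin n, (i : ℕ) < j → ω' i = Cs i)).filter (fun ω' => ω' j = D)
        = Finset.univ.filter (fun ω' : Fin n → A => ∀ i : Fin n, (i : ℕ) < (j : ℕ) + 1 →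
          ω' i = Function.update Cs j D i) := by
      intro D
      ext ω'
      simp only [Finset.mem_filter, Finset.mem_univ, true_and]
      constructor
      · rintro ⟨h1, h2⟩ i hi
        by_cases hij : i = j
        · subst hij; simp [h2]
        · rw [Function.update_of_ne hij]
          exact h1 i (by have : (i : ℕ) ≠ j := fun h => hij (Fin.ext h)
                         omega)
      · intro h
        refine ⟨fun i hi => ?_, ?_⟩
        · have hij : i ≠ j := by rintro rfl; omega
          rw [h i (by omega), Function.update_of_ne hij]
        · rw [h j (by omega)]; simp
    rw [hce j Cs, le_div_iff₀ (hpos _ _),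
      ← Finset.sum_fiberwise _ (fun ω' : Fin n → A => ω' j),
      Finset.card_eq_sum_card_fiberwise (f := fun ω' : Fin n → A => ω' j) (t := Finset.univ)
        (by intro x _; simp)]
    push_cast
    rw [Finset.mul_sum]
    refine Finset.sum_le_sum fun D _ => ?_
    rw [hfib D, ← le_div_iff₀ (hpos _ _), ← hce]
    exact hCs j D
  have all : ∀ j : ℕ, j ≤ n → ce j Cs ≤ ce 0 Cs := by
    intro j
    induction j with
    | zero => intro _; exact le_rfl
    | succ j ih => intro h; exact (step ⟨j, h⟩).trans (ih (by omega))
  have h0 := all n le_rfl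
  rw [hce, hce] at h0
  have e1 : Finset.univ.filter
        (fun ω' : Fin n → A => ∀ i : Fin n, (i : ℕ) < n → ω' i = Cs i) = {Cs} := by
    ext ω'
    simp [funext_iff]
  rw [e1] at h0
  simpa using h0

lemma aux_desc (a m c : ℕ) (h : a ≤ m) :
    a.descFactorial c * m ^ c ≤ m.descFactorial c * a ^ c := by
  induction c with
  | zero => simp
  | succ c ih =>
    rw [Nat.descFactorial_succ, Nat.descFactorial_succ, pow_succ, pow_succ]
    have : (a - c) * m ≤ (m - c) * a := by
      rw [Nat.sub_mul, Nat.sub_mul, mul_comm a m]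
      exact Nat.sub_le_sub_left (Nat.mul_le_mul_left _ h) _
    calc (a - c) * a.descFactorial c * (m ^ c * m)
        = (a.descFactorial c * m ^ c) * ((a - c) * m) := by ring
      _ ≤ (m.descFactorial c * a ^ c) * ((m - c) * a) := Nat.mul_le_mul ih this
      _ = _ := by ring

lemma aux_choose (a m c : ℕ) (h : a ≤ m) : a.choose c * m ^ c ≤ m.choose c * a ^ c := by
  have := aux_desc a m c h
  rw [Nat.descFactorial_eq_factorial_mul_choose, Nat.descFactorial_eq_factorial_mul_choose,
    mul_assoc, mul_assoc] at this
  exact Nat.le_of_mul_le_mul_left this (Nat.factorial_pos c)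

lemma aux_cardsub (m c : ℕ) (T : Finset (Fin m)) :
    (Finset.univ.filter fun C : {C : Finset (Fin m) // C.card = c} => (C : Finset (Fin m)) ⊆ T).card
      = T.card.choose c := by
  rw [← Finset.card_powersetCard]
  refine Finset.card_bij (fun C _ => (C : Finset (Fin m))) ?_ ?_ ?_
  · intro C hC
    simp at hC
    simp [Finset.mem_powersetCard, hC, C.2]
  · intro C _ D _ h; exact Subtype.ext h
  · intro C hC
    rw [Finset.mem_powersetCard] at hC
    exact ⟨⟨C, hC.2⟩, by simp [hC.1], rfl⟩

lemma aux_cardA (m c : ℕ) : Fintype.card {C : Finset (Fin m) // C.card = c} = m.choose c := by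
  have := aux_cardsub m c Finset.univ
  simpa using this

lemma aux_marg (m c : ℕ) (hc : 0 < c) (v : Fin m) :
    m * (Finset.univ.filter fun C : {C : Finset (Fin m) // C.card = c} => v ∈ (C : Finset (Fin m))).card
      = m.choose c * c := by
  have h1 := aux_cardsub m c (Finset.univ.erase v)
  have h2 := Finset.card_filter_add_card_filter_not
    (s := (Finset.univ : Finset {C : Finset (Fin m) // C.card = c})) (fun C => v ∈ (C : Finset (Fin m)))
  have e : (Finset.univ.filter fun C : {C : Finset (Fin m) // C.card = c} => ¬ v ∈ (C : Finset (Fin m)))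
    = (Finset.univ.filter fun C : {C : Finset (Fin m) // C.card = c} => (C : Finset (Fin m)) ⊆ Finset.univ.erase v) := by
    ext C
    simp [Finset.subset_erase]
  rw [e, h1, Finset.card_univ, aux_cardA, Finset.card_erase_of_mem (Finset.mem_univ _)] at h2
  obtain ⟨m, rfl⟩ : ∃ m', m = m' + 1 := ⟨m - 1, by have := v.2; omega⟩
  obtain ⟨c, rfl⟩ : ∃ m', c = m' + 1 := ⟨c - 1, by omega⟩
  simp only [Finset.card_univ, Fintype.card_fin, Nat.add_sub_cancel] at h2
  rw [← Nat.add_one_mul_choose_eq]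
  rw [Nat.choose_succ_succ'] at h2
  have : (Finset.univ.filter fun C : {C : Finset (Fin (m+1)) // C.card = c+1} => v ∈ (C : Finset (Fin (m+1)))).card = m.choose c := by omega
  rw [this]

lemma aux_pair (m c n : ℕ) (S : Finset (Fin n)) (T : Finset (Fin m)) :
    (Finset.univ.filter fun ω : Fin n → {C : Finset (Fin m) // C.card = c} =>
      S.biUnion (fun u => (ω u : Finset (Fin m))) ⊆ T).card * (m.choose c) ^ S.card
      = (T.card.choose c) ^ S.card * (m.choose c) ^ n := by
  have e : (Finset.univ.filter fun ω : Fin n → {C : Finset (Fin m) // C.card = c} =>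
      S.biUnion (fun u => (ω u : Finset (Fin m))) ⊆ T) =
      Fintype.piFinset (fun i : Fin n => if i ∈ S then
        (Finset.univ.filter fun C : {C : Finset (Fin m) // C.card = c} => (C : Finset (Fin m)) ⊆ T)
        else Finset.univ) := by
    ext ω
    simp only [Finset.mem_filter, Finset.mem_univ, true_and, Finset.biUnion_subset,
      Fintype.mem_piFinset]
    refine forall_congr' fun i => ?_
    by_cases h : i ∈ S <;> simp [h]
  rw [e, Fintype.card_piFinset]
  have : ∀ i : Fin n, (if i ∈ S then
        (Finset.univ.filter fun C : {C : Finset (Fin m) // C.card = c} => (C : Finset (Fin m)) ⊆ T)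
        else Finset.univ).card = if i ∈ S then T.card.choose c else m.choose c := by
    intro i
    split_ifs
    · exact aux_cardsub m c T
    · rw [Finset.card_univ, aux_cardA]
  rw [Finset.prod_congr rfl fun i _ => this i, Finset.prod_ite, Finset.prod_const, Finset.prod_const,
    mul_assoc, ← pow_add]
  have h2 := Finset.card_filter_add_card_filter_not (s := (Finset.univ : Finset (Fin n))) (fun i => i ∈ S)
  have h3 : (Finset.univ.filter fun i : Fin n => i ∈ S) = S := by ext; simp
  rw [h3] at h2 ⊢
  rw [add_comm, h2]; simp


lemma aux_num (c k m n s : ℕ) (hc : 0 < c) (hm : k ≤ m) (hs : c + 1 ≤ s) (hsk : s ≤ k)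
    (hn : (n : ℝ) ≤ (m : ℝ) ^ ((c : ℝ) - 1 + 1 / (k : ℝ)) / (4 * (k : ℝ) ^ (c + 1))) :
    (n : ℝ) ^ s * (m : ℝ) ^ (s - 1) * ((s - 1).choose c : ℝ) ^ s ≤
      (m.choose c : ℝ) ^ s * (1 / (4 * k)) ^ s := by
  have hk0 : 0 < k := by omega
  have hk : (0 : ℝ) < k := by exact_mod_cast hk0
  have hm0 : (0 : ℝ) < m := by exact_mod_cast (by omega : 0 < m)
  have hm1 : (1 : ℝ) ≤ m := by exact_mod_cast (by omega : 1 ≤ m)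
  set x : ℝ := (m : ℝ) ^ (1 / (k : ℝ)) with hx
  have hx1 : 1 ≤ x := Real.one_le_rpow hm1 (by positivity)
  have hxk : x ^ k = m := by
    rw [hx, ← Real.rpow_natCast, ← Real.rpow_mul hm0.le]
    rw [one_div_mul_cancel hk.ne', Real.rpow_one]
  have hxs : x ^ s ≤ m := by rw [← hxk]; exact pow_le_pow_right₀ hx1 hsk
  have hn2 : (n : ℝ) * (4 * (k : ℝ) ^ (c + 1)) ≤ (m : ℝ) ^ (c - 1) * x := by
    rw [le_div_iff₀ (by positivity)] at hn
    refine hn.trans (le_of_eq ?_)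
    rw [Real.rpow_add hm0, ← Real.rpow_natCast, Nat.cast_sub hc, Nat.cast_one]
  have h1 : (n : ℝ) ^ s * (m : ℝ) ^ (s - 1) * (4 * (k : ℝ) ^ (c + 1)) ^ s ≤ ((m : ℝ) ^ c) ^ s := by
    calc (n : ℝ) ^ s * (m : ℝ) ^ (s - 1) * (4 * (k : ℝ) ^ (c + 1)) ^ s
        = ((n : ℝ) * (4 * (k : ℝ) ^ (c + 1))) ^ s * (m : ℝ) ^ (s - 1) := by rw [mul_pow]; ring
      _ ≤ ((m : ℝ) ^ (c - 1) * x) ^ s * (m : ℝ) ^ (s - 1) := by gcongr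
      _ = ((m : ℝ) ^ (c - 1)) ^ s * x ^ s * (m : ℝ) ^ (s - 1) := by rw [mul_pow]
      _ ≤ ((m : ℝ) ^ (c - 1)) ^ s * m * (m : ℝ) ^ (s - 1) := by gcongr
      _ = ((m : ℝ) ^ (c - 1)) ^ s * ((m : ℝ) ^ (s - 1) * m) := by ring
      _ = ((m : ℝ) ^ c) ^ s := by
          rw [← pow_succ, Nat.sub_add_cancel (by omega), ← mul_pow, ← pow_succ, Nat.sub_add_cancel hc]
  have h2 : ((s - 1).choose c : ℝ) * (m : ℝ) ^ c ≤ (m.choose c : ℝ) * (k : ℝ) ^ c := by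
    have := aux_choose (s - 1) m c (by omega)
    have h' : m.choose c * (s - 1) ^ c ≤ m.choose c * k ^ c :=
      Nat.mul_le_mul_left _ (Nat.pow_le_pow_left (by omega) _)
    exact_mod_cast this.trans h'
  have h3 : ((s - 1).choose c : ℝ) ^ s * ((m : ℝ) ^ c) ^ s ≤ (m.choose c : ℝ) ^ s * ((k : ℝ) ^ c) ^ s := by
    rw [← mul_pow, ← mul_pow]
    gcongr
  rw [one_div, inv_pow, ← div_eq_mul_inv, le_div_iff₀ (by positivity)]
  have hM : (0 : ℝ) < ((m : ℝ) ^ c) ^ s := by positivity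
  refine le_of_mul_le_mul_right ?_ hM
  calc _ = (n : ℝ) ^ s * (m : ℝ) ^ (s - 1) * (4 * k) ^ s *
        (((s - 1).choose c : ℝ) ^ s * ((m : ℝ) ^ c) ^ s) := by ring
    _ ≤ (n : ℝ) ^ s * (m : ℝ) ^ (s - 1) * (4 * k) ^ s *
        ((m.choose c : ℝ) ^ s * ((k : ℝ) ^ c) ^ s) := by gcongr
    _ = (m.choose c : ℝ) ^ s * ((n : ℝ) ^ s * (m : ℝ) ^ (s - 1) * (4 * (k : ℝ) ^ (c + 1)) ^ s) := by
        rw [mul_pow, mul_pow, pow_succ, mul_pow]; ring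
    _ ≤ _ := by gcongr

lemma aux_EY (c k m n : ℕ) (hc : 0 < c) (hck : c + 1 ≤ k) (hm : k ≤ m)
    (hn : (n : ℝ) ≤ (m : ℝ) ^ ((c : ℝ) - 1 + 1 / (k : ℝ)) / (4 * (k : ℝ) ^ (c + 1))) :
    ∑ ω : Fin n → {C : Finset (Fin m) // C.card = c},
      ((Finset.univ.filter fun p : Finset (Fin n) × Finset (Fin m) =>
              c + 1 ≤ p.1.card ∧ p.1.card ≤ k ∧ p.2.card = p.1.card - 1 ∧
                p.1.biUnion (fun u => (ω u : Finset (Fin m))) ⊆ p.2).card : ℝ)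
      ≤ (m.choose c : ℝ) ^ n * (1 / 4) := by
  have hk0 : (0 : ℝ) < k := by exact_mod_cast (by omega : 0 < k)
  have hN : (0 : ℝ) < m.choose c := by exact_mod_cast Nat.choose_pos (by omega)
  set V := Finset.univ.filter fun p : Finset (Fin n) × Finset (Fin m) =>
    c + 1 ≤ p.1.card ∧ p.1.card ≤ k ∧ p.2.card = p.1.card - 1 with hV
  have e1 : ∀ ω : Fin n → {C : Finset (Fin m) // C.card = c},
      (Finset.univ.filter fun p : Finset (Fin n) × Finset (Fin m) =>
              c + 1 ≤ p.1.card ∧ p.1.card ≤ k ∧ p.2.card = p.1.card - 1 ∧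
                p.1.biUnion (fun u => (ω u : Finset (Fin m))) ⊆ p.2).card
      = (V.filter fun p => p.1.biUnion (fun u => (ω u : Finset (Fin m))) ⊆ p.2).card := by
    intro ω
    congr 1
    ext p
    simp [hV, and_assoc]
  have e2 : ∑ ω : Fin n → {C : Finset (Fin m) // C.card = c},
      (V.filter fun p => p.1.biUnion (fun u => (ω u : Finset (Fin m))) ⊆ p.2).card =
      ∑ p ∈ V, (Finset.univ.filter fun ω : Fin n → {C : Finset (Fin m) // C.card = c} =>
        p.1.biUnion (fun u => (ω u : Finset (Fin m))) ⊆ p.2).card := by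
    simp only [Finset.card_filter]
    exact Finset.sum_comm
  rw [Finset.sum_congr rfl fun ω _ => by rw [e1 ω], ← Nat.cast_sum, e2, Nat.cast_sum]
  rw [← Finset.sum_fiberwise_of_maps_to (s := V) (t := Finset.Icc (c + 1) k) (g := fun p => p.1.card)
    (by intro p hp; simp [hV] at hp; simp; omega)]
  have key : ∀ s ∈ Finset.Icc (c + 1) k, ∑ p ∈ V.filter (fun p => p.1.card = s),
      ((Finset.univ.filter fun ω : Fin n → {C : Finset (Fin m) // C.card = c} =>
        p.1.biUnion (fun u => (ω u : Finset (Fin m))) ⊆ p.2).card : ℝ) ≤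
      (m.choose c : ℝ) ^ n * (1 / (4 * k)) := by
    intro s hs
    rw [Finset.mem_Icc] at hs
    have hval : ∀ p ∈ V.filter (fun p => p.1.card = s),
      ((Finset.univ.filter fun ω : Fin n → {C : Finset (Fin m) // C.card = c} =>
        p.1.biUnion (fun u => (ω u : Finset (Fin m))) ⊆ p.2).card : ℝ) =
      ((s - 1).choose c : ℝ) ^ s * (m.choose c : ℝ) ^ n / (m.choose c : ℝ) ^ s := by
      intro p hp
      simp only [hV, Finset.mem_filter, Finset.mem_univ, true_and] at hp
      have := aux_pair m c n p.1 p.2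
      rw [hp.1.2.2, hp.2] at this
      rw [eq_div_iff (by positivity)]
      exact_mod_cast this
    have hcard : (V.filter (fun p => p.1.card = s)).card ≤ n ^ s * m ^ (s - 1) := by
      have hsub : V.filter (fun p => p.1.card = s) ⊆
          (Finset.powersetCard s Finset.univ) ×ˢ (Finset.powersetCard (s - 1) Finset.univ) := by
        intro p hp
        simp only [hV, Finset.mem_filter, Finset.mem_univ, true_and] at hp
        simp [Finset.mem_product, Finset.mem_powersetCard, hp.2, hp.1.2.2]
      refine (Finset.card_le_card hsub).trans ?_
      rw [Finset.card_product, Finset.card_powersetCard, Finset.card_powersetCard]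
      simp only [Finset.card_univ, Fintype.card_fin]
      exact Nat.mul_le_mul (Nat.choose_le_pow _ _) (Nat.choose_le_pow _ _)
    have hcard' : ((V.filter (fun p => p.1.card = s)).card : ℝ) ≤ (n : ℝ) ^ s * (m : ℝ) ^ (s - 1) := by
      exact_mod_cast hcard
    rw [Finset.sum_congr rfl hval, Finset.sum_const, nsmul_eq_mul]
    have hnum := aux_num c k m n s hc hm hs.1 hs.2 hn
    calc _ ≤ ((n : ℝ) ^ s * (m : ℝ) ^ (s - 1)) *
          (((s - 1).choose c : ℝ) ^ s * (m.choose c : ℝ) ^ n / (m.choose c : ℝ) ^ s) := by gcongr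
      _ = ((n : ℝ) ^ s * (m : ℝ) ^ (s - 1) * ((s - 1).choose c : ℝ) ^ s) *
          (m.choose c : ℝ) ^ n / (m.choose c : ℝ) ^ s := by ring
      _ ≤ ((m.choose c : ℝ) ^ s * (1 / (4 * k)) ^ s) *
          (m.choose c : ℝ) ^ n / (m.choose c : ℝ) ^ s := by gcongr
      _ = (m.choose c : ℝ) ^ n * (1 / (4 * k)) ^ s := by field_simp
      _ ≤ (m.choose c : ℝ) ^ n * (1 / (4 * k)) := by
          gcongr
          refine pow_le_of_le_one (by positivity) ?_ (by omega)
          rw [div_le_one (by positivity)]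
          have : (1 : ℝ) ≤ k := by exact_mod_cast (by omega : 1 ≤ k)
          linarith
  refine (Finset.sum_le_sum key).trans ?_
  rw [Finset.sum_const, nsmul_eq_mul, Nat.card_Icc]
  have : ((k + 1 - (c + 1) : ℕ) : ℝ) ≤ k := by exact_mod_cast (by omega)
  calc _ ≤ (k : ℝ) * ((m.choose c : ℝ) ^ n * (1 / (4 * k))) := by gcongr
    _ = _ := by field_simp

lemma aux_EZ (c m n : ℕ) (hc : 0 < c) (hm : c ≤ m) :
    ∑ ω : Fin n → {C : Finset (Fin m) // C.card = c},
      ((Finset.univ.filter fun v : Fin m =>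
              Real.sqrt ((n : ℝ) / 2 * Real.log (4 * m)) <
                |((Finset.univ.filter fun u : Fin n => v ∈ (ω u : Finset (Fin m))).card : ℝ) -
                  (n : ℝ) * c / m|).card : ℝ)
      ≤ (m.choose c : ℝ) ^ n * (1 / 2) := by
  have hm0 : (0 : ℝ) < m := by exact_mod_cast (by omega : 0 < m)
  have hN : (0 : ℝ) < m.choose c := by exact_mod_cast Nat.choose_pos (by omega)
  rcases Nat.eq_zero_or_pos n with rfl | hn
  · simp
  have hn0 : (0 : ℝ) < n := by exact_mod_cast hn
  have hA : Nonempty {C : Finset (Fin m) // C.card = c} := by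
    rw [← Fintype.card_pos_iff, aux_cardA]
    exact Nat.choose_pos hm
  set t := Real.sqrt ((n : ℝ) / 2 * Real.log (4 * m)) with ht
  have ht0 : 0 ≤ t := Real.sqrt_nonneg _
  have hlog : 0 ≤ Real.log (4 * m) := by
    apply Real.log_nonneg
    have : (1 : ℝ) ≤ m := by exact_mod_cast (by omega : 1 ≤ m)
    linarith
  have hexp : Real.exp (-(2 * t ^ 2 / n)) = 1 / (4 * m) := by
    rw [ht, Real.sq_sqrt (by positivity)]
    have : 2 * ((n : ℝ) / 2 * Real.log (4 * m)) / n = Real.log (4 * m) := by field_simp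
    rw [this, Real.exp_neg, Real.exp_log (by positivity), one_div]
  have e2 : ∑ ω : Fin n → {C : Finset (Fin m) // C.card = c},
      (Finset.univ.filter fun v : Fin m => t <
                |((Finset.univ.filter fun u : Fin n => v ∈ (ω u : Finset (Fin m))).card : ℝ) -
                  (n : ℝ) * c / m|).card =
      ∑ v : Fin m, (Finset.univ.filter fun ω : Fin n → {C : Finset (Fin m) // C.card = c} =>
        t < |((Finset.univ.filter fun u : Fin n => v ∈ (ω u : Finset (Fin m))).card : ℝ) -
                  (n : ℝ) * c / m|).card := by
    simp only [Finset.card_filter (s := (Finset.univ : Finset (Fin m))),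
      Finset.card_filter (s := (Finset.univ : Finset (Fin n → {C : Finset (Fin m) // C.card = c})))]
    exact Finset.sum_comm
  rw [← Nat.cast_sum, e2, Nat.cast_sum]
  have key : ∀ v : Fin m, ((Finset.univ.filter fun ω : Fin n → {C : Finset (Fin m) // C.card = c} =>
        t < |((Finset.univ.filter fun u : Fin n => v ∈ (ω u : Finset (Fin m))).card : ℝ) -
                  (n : ℝ) * c / m|).card : ℝ) ≤ (m.choose c : ℝ) ^ n * (1 / (2 * m)) := by
    intro v
    set f : {C : Finset (Fin m) // C.card = c} → ℝ :=
      fun C => if v ∈ (C : Finset (Fin m)) then 1 else 0 with hf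
    have hfs : ∑ C, f C = (Fintype.card {C : Finset (Fin m) // C.card = c} : ℝ) * ((c : ℝ) / m) := by
      have h := aux_marg m c hc v
      rw [hf, aux_cardA]
      rw [Finset.sum_boole]
      rw [← mul_div_assoc, eq_div_iff hm0.ne', mul_comm]
      exact_mod_cast h
    have t1 := aux_tail f 0 ((c : ℝ) / m) (by
      intro C; simp only [hf]; split_ifs <;> simp) hfs n hn t ht0
    have t2 := aux_tail (fun C => - f C) (-1) (-((c : ℝ) / m)) (by
      intro C; simp only [hf]; split_ifs <;> simp) (by simp [hfs]) n hn t ht0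
    rw [hexp, aux_cardA] at t1 t2
    have hdeg : ∀ ω : Fin n → {C : Finset (Fin m) // C.card = c},
        ∑ i, (f (ω i) - (c : ℝ) / m) =
        ((Finset.univ.filter fun u : Fin n => v ∈ (ω u : Finset (Fin m))).card : ℝ) -
                  (n : ℝ) * c / m := by
      intro ω
      rw [Finset.sum_sub_distrib, hf, Finset.sum_boole]
      simp [mul_div_assoc]
    have hdeg2 : ∀ ω : Fin n → {C : Finset (Fin m) // C.card = c},
        ∑ i, (- f (ω i) - -((c : ℝ) / m)) =
        -(((Finset.univ.filter fun u : Fin n => v ∈ (ω u : Finset (Fin m))).card : ℝ) -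
                  (n : ℝ) * c / m) := by
      intro ω
      rw [← hdeg, ← Finset.sum_neg_distrib]
      exact Finset.sum_congr rfl fun i _ => by ring
    simp only [hdeg] at t1
    simp only [hdeg2] at t2
    simp only [lt_abs]
    rw [Finset.filter_or]
    refine (Nat.cast_le.2 (Finset.card_union_le _ _)).trans ?_
    push_cast
    refine (add_le_add t1 t2).trans (le_of_eq ?_)
    field_simp
    norm_num
  refine (Finset.sum_le_sum fun v _ => key v).trans ?_
  rw [Finset.sum_const, nsmul_eq_mul, Finset.card_univ, Fintype.card_fin]
  apply le_of_eq
  field_simp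



/-- **Correctness of the derandomized construction (Algorithm 1).**
For positive constants `c, k` with `c + 1 ≤ k` and all sufficiently large `m`, set
`n = ⌊m^(c-1+1/k)/(4k^(c+1))⌋`. In the random model where each of the `n` left vertices
independently receives a uniformly random `c`-element subset of `Fin m` as its
neighborhood, let `Y ω` count the bad pairs `(S, S')` (with `c+1 ≤ |S| ≤ k`,
`|S'| = |S| − 1`, `Γ(S) ⊆ S'`) and let `Z ω` count the right vertices whose degree
deviates from `nc/m` by more than `√((n/2)·ln(4m))`. If the neighborhoods
`Cs 1, …, Cs n` are chosen sequentially so that each `Cs j` minimizes the conditional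
expectation `ce (j+1)` of `Y + Z` given the prefix, then in the resulting
deterministic graph `Y = 0` and `Z = 0`: the graph is a `c`-uniform `(n, cn, k, m)`-CBC
(every Hall condition `|Γ(S)| ≥ |S|` for `1 ≤ |S| ≤ k` holds) in which every right
vertex has degree in `[nc/m − √((n/2)·ln(4m)), nc/m + √((n/2)·ln(4m))]`. -/
theorem stmt_11 (c k : ℕ) (hc : 0 < c) (hck : c + 1 ≤ k) :
    ∃ M : ℕ, ∀ m : ℕ, M ≤ m →
      ∀ n : ℕ, n = ⌊(m : ℝ) ^ ((c : ℝ) - 1 + 1 / (k : ℝ)) / (4 * (k : ℝ) ^ (c + 1))⌋₊ →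
        ∀ Y Z : (Fin n → {C : Finset (Fin m) // C.card = c}) → ℕ,
          (∀ ω, Y ω = (Finset.univ.filter fun p : Finset (Fin n) × Finset (Fin m) =>
              c + 1 ≤ p.1.card ∧ p.1.card ≤ k ∧ p.2.card = p.1.card - 1 ∧
                p.1.biUnion (fun u => (ω u : Finset (Fin m))) ⊆ p.2).card) →
          (∀ ω, Z ω = (Finset.univ.filter fun v : Fin m =>
              Real.sqrt ((n : ℝ) / 2 * Real.log (4 * m)) <
                |((Finset.univ.filter fun u : Fin n => v ∈ (ω u : Finset (Fin m))).card : ℝ) -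
                  (n : ℝ) * c / m|).card) →
          ∀ ce : ℕ → (Fin n → {C : Finset (Fin m) // C.card = c}) → ℝ,
            (∀ (j : ℕ) (ω : Fin n → {C : Finset (Fin m) // C.card = c}),
              ce j ω =
                (∑ ω' ∈ Finset.univ.filter
                    (fun ω' : Fin n → {C : Finset (Fin m) // C.card = c} =>
                      ∀ i : Fin n, (i : ℕ) < j → ω' i = ω i),
                  ((Y ω' + Z ω' : ℕ) : ℝ)) /
                ((Finset.univ.filter
                    (fun ω' : Fin n → {C : Finset (Fin m) // C.card = c} =>
                      ∀ i : Fin n, (i : ℕ) < j → ω' i = ω i)).card : ℝ)) →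
            ∀ Cs : Fin n → {C : Finset (Fin m) // C.card = c},
              (∀ j : Fin n, ∀ D : {C : Finset (Fin m) // C.card = c},
                ce ((j : ℕ) + 1) Cs ≤ ce ((j : ℕ) + 1) (Function.update Cs j D)) →
              Y Cs = 0 ∧ Z Cs = 0 ∧
              (∀ S : Finset (Fin n), 1 ≤ S.card → S.card ≤ k →
                S.card ≤ (S.biUnion fun u => (Cs u : Finset (Fin m))).card) ∧
              (∀ v : Fin m,
                (n : ℝ) * c / m - Real.sqrt ((n : ℝ) / 2 * Real.log (4 * m)) ≤
                  ((Finset.univ.filter fun u : Fin n => v ∈ (Cs u : Finset (Fin m))).card : ℝ) ∧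
                ((Finset.univ.filter fun u : Fin n => v ∈ (Cs u : Finset (Fin m))).card : ℝ) ≤
                  (n : ℝ) * c / m + Real.sqrt ((n : ℝ) / 2 * Real.log (4 * m))) := by
  refine ⟨k, ?_⟩
  intro m hm n hn Y Z hY hZ ce hce Cs hCs
  have hA : Nonempty {C : Finset (Fin m) // C.card = c} := by
    rw [← Fintype.card_pos_iff, aux_cardA]
    exact Nat.choose_pos (by omega)
  have hN : (0 : ℝ) < m.choose c := by exact_mod_cast Nat.choose_pos (by omega)
  have hn' : (n : ℝ) ≤ (m : ℝ) ^ ((c : ℝ) - 1 + 1 / (k : ℝ)) / (4 * (k : ℝ) ^ (c + 1)) := by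
    rw [hn]
    exact Nat.floor_le (by positivity)
  have hd := aux_derand n (fun ω => ((Y ω + Z ω : ℕ) : ℝ)) ce
    (by intro j ω; rw [hce j ω]; congr!) Cs (by intro j D; convert hCs j D)
  have hEY := aux_EY c k m n hc hck hm hn'
  have hEZ := aux_EZ c m n hc (by omega)
  simp only [← hY] at hEY
  simp only [← hZ] at hEZ
  rw [aux_cardA] at hd
  have hlt : ((Y Cs + Z Cs : ℕ) : ℝ) < 1 := by
    refine lt_of_le_of_lt hd ?_
    rw [div_lt_one (by positivity)]
    simp only [Nat.cast_add]
    rw [Finset.sum_add_distrib]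
    have : (0 : ℝ) < (m.choose c : ℝ) ^ n := by positivity
    linarith
  have hlt' : Y Cs + Z Cs < 1 := by exact_mod_cast hlt
  have hY0 : Y Cs = 0 := by omega
  have hZ0 : Z Cs = 0 := by omega
  refine ⟨hY0, hZ0, ?_, ?_⟩
  · intro S hS1 hSk
    by_contra hcon
    push Not at hcon
    by_cases hSc : S.card ≤ c
    · obtain ⟨u, hu⟩ := Finset.card_pos.1 hS1
      have := Finset.card_le_card
        (Finset.subset_biUnion_of_mem (fun u => (Cs u : Finset (Fin m))) hu)
      have h2 := (Cs u).2
      omega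
    · obtain ⟨T, hT1, hT2, hT3⟩ := Finset.exists_subsuperset_card_eq
        (Finset.subset_univ (S.biUnion fun u => (Cs u : Finset (Fin m))))
        (n := S.card - 1) (by omega) (by simp; omega)
      rw [hY, Finset.card_eq_zero] at hY0
      have : (S, T) ∈ (∅ : Finset (Finset (Fin n) × Finset (Fin m))) := by
        rw [← hY0]
        simp only [Finset.mem_filter, Finset.mem_univ, true_and]
        exact ⟨by omega, hSk, hT3, hT1⟩
      simp at this
  · intro v
    rw [hZ, Finset.card_eq_zero, Finset.filter_eq_empty_iff] at hZ0
    have := hZ0 (Finset.mem_univ v)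
    rw [not_lt, abs_le] at this
    constructor <;> linarith [this.1, this.2]
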